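/- arXiv:2307.05559 — 2 statements merged into one kernel-verified Lean document; each statement's English description precedes it below -/
import Mathlib

section
/- Suppose the complex-valued potential q satisfies condition A for x ≥ x₀. Then 𝒩 = ℂ if and only if |q(x)| → +∞ as x → +∞. -/
/-!
Write `p = √q`.

If `𝒩 = ℂ` but `|q|` does not tend to infinity, then `q` has a cluster point `lam` at infinity.
Since `lam ∈ 𝒩`, continuity turns the a.e. bound `Re √(q - lam) ≥ C` into one valid for all large `x`
(`CondA.le_re_sqrtQ`), so `|q - lam| ≥ C²` eventually, which is absurd.

Conversely, let `|q| → ∞` and `lam ∈ ℂ`. For large `|q|` the principal root `√(q - lam)` differs from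
`p` by at most `|lam| / |p|` (`norm_sub_le_of_sq_sub_sq`), while
`|q' / (q - lam)| = |q' / q| · |q / (q - lam)|` exceeds `|q' / q|` by a factor `1 + O(1/|q|)`.
Since `½ |p'/p| ≤ Re p ≤ |p|`, both errors in the inequality of condition A are `O(1/|p|)`
(`condA_ineq_shift`), so condition A holds for `q - lam` with the constant `C / 2`.
-/


open MeasureTheory Filter Topology Complex

noncomputable section

/-- The open sector `Π_κ = {z ≠ 0 : arg z ∈ (-π+κ, π-κ)}`. -/
def PiSector (κ : ℝ) : Set ℂ :=
  {z : ℂ | z ≠ 0 ∧ -Real.pi + κ < z.arg ∧ z.arg < Real.pi - κ}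

/-- `f` is locally absolutely continuous on `[a,∞)` with a.e. derivative `f'`:
`f'` is locally integrable there and `f` is recovered from `f'` by integration. -/
def LocACOn (f f' : ℝ → ℂ) (a : ℝ) : Prop :=
  (∀ b, a ≤ b → IntervalIntegrable f' volume a b) ∧
  ∀ x, a ≤ x → f x = f a + ∫ t in a..x, f' t

/-- `y` (with first derivative `y'`) is a solution of `-y'' + q y = f` on `ℝ₊`:
`y, y'` are locally absolutely continuous on `[0,∞)` and the a.e. derivative of
`y'` equals `q y - f`. -/
def IsSol (q f y y' : ℝ → ℂ) : Prop :=
  LocACOn y y' 0 ∧ LocACOn y' (fun x => q x * y x - f x) 0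

/-- `y` is nontrivial on `ℝ₊`. -/
def NontrivialSol (y : ℝ → ℂ) : Prop := ∃ x, 0 ≤ x ∧ y x ≠ 0

/-- membership in the weighted space `L₂(ℝ₊, w)`. -/
def MemL2 (w : ℝ → ℝ) (f : ℝ → ℂ) : Prop :=
  AEStronglyMeasurable f (volume.restrict (Set.Ici (0:ℝ))) ∧
  IntegrableOn (fun x => w x * ‖f x‖ ^ 2) (Set.Ici (0:ℝ)) volume

/-- the branch `p = √q` with positive real part (principal branch). -/
def sqrtQ (q : ℝ → ℂ) (x : ℝ) : ℂ := (q x) ^ ((1 : ℂ) / 2)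

/-- the a.e. derivative of `sqrtQ q`, where `q'` is the a.e. derivative of `q`. -/
def sqrtQD (q q' : ℝ → ℂ) (x : ℝ) : ℂ := q' x / (2 * sqrtQ q x)

/-- the weight `ρ = Re p - (1/2)|p'/p|`. -/
def rho (q q' : ℝ → ℂ) (x : ℝ) : ℝ :=
  (sqrtQ q x).re - (1 / 2) * ‖sqrtQD q q' x / sqrtQ q x‖

/-- Condition A for `q` on `[x₀,∞)` with constant `C`, where `q'` is the
a.e. derivative of `q`: `q ∈ L¹loc(ℝ₊)`, `q` is locally absolutely continuous
on `[x₀,∞)`, `q` takes values in a sector `Π_κ` on `[x₀,∞)`, the branch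
`p = √q` has positive real part there, and
`Re p ≥ C + (1/2)|p'/p|` a.e. on `[x₀,∞)`. -/
def CondA (q q' : ℝ → ℂ) (x₀ C : ℝ) : Prop :=
  LocallyIntegrableOn q (Set.Ici (0:ℝ)) volume ∧
  LocACOn q q' x₀ ∧
  (∃ κ, 0 ≤ κ ∧ ∀ x, x₀ ≤ x → q x ∈ PiSector κ) ∧
  (∀ x, x₀ ≤ x → 0 < (sqrtQ q x).re) ∧
  0 < C ∧
  ∀ᵐ x : ℝ, x₀ ≤ x → C + (1 / 2) * ‖sqrtQD q q' x / sqrtQ q x‖ ≤ (sqrtQ q x).re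

/-- The set `𝒩` of spectral parameters `lam` such that `q - lam` satisfies
condition A for `x ≥ x₁(lam)` for some `x₁(lam) ≥ 0` (note `(q - lam)' = q'`). -/
def NSet (q q' : ℝ → ℂ) : Set ℂ :=
  {lam : ℂ | ∃ x₁ C, 0 ≤ x₁ ∧ CondA (fun x => q x - lam) q' x₁ C}

lemma sqrt_sq (z : ℂ) : (z ^ ((1 : ℂ) / 2)) ^ 2 = z := by
  simp

lemma sqrt_re_nonneg (z : ℂ) : 0 ≤ (z ^ ((1 : ℂ) / 2)).re := by
  rcases eq_or_ne z 0 with rfl | hz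
  · simp
  · rw [Complex.cpow_def_of_ne_zero hz, Complex.exp_re]
    refine mul_nonneg (Real.exp_pos _).le (Real.cos_nonneg_of_mem_Icc ?_)
    have h : (Complex.log z * (1 / 2)).im = z.arg / 2 := by
      have h2 : Complex.log z * (1 / 2) = ((1 / 2 : ℝ) : ℂ) * Complex.log z := by
        push_cast; ring
      rw [h2, Complex.im_ofReal_mul, Complex.log_im]; ring
    rw [h]
    constructor <;> linarith [Complex.neg_pi_lt_arg z, Complex.arg_le_pi z]

lemma sq_mem_slitPlane {w : ℂ} (hw : 0 < w.re) : w ^ 2 ∈ slitPlane := by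
  rw [Complex.mem_slitPlane_iff, sq, Complex.mul_re, Complex.mul_im]
  rcases eq_or_ne w.im 0 with h | h
  · left; rw [h]; nlinarith
  · right
    have := mul_ne_zero hw.ne' h
    intro h0; apply this; linarith

lemma slitPlane_subset_PiSector_zero {z : ℂ} (hz : z ∈ slitPlane) : z ∈ PiSector 0 := by
  have h := Complex.mem_slitPlane_iff_arg.1 hz
  refine ⟨h.2, by simpa using Complex.neg_pi_lt_arg z, ?_⟩
  simpa using lt_of_le_of_ne (Complex.arg_le_pi z) h.1

lemma LocACOn.continuousOn {f f' : ℝ → ℂ} {a : ℝ} (h : LocACOn f f' a) (b : ℝ) (hb : a ≤ b) :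
    ContinuousOn f (Set.Icc a b) := by
  have h1 := intervalIntegral.continuousOn_primitive_interval' (h.1 b hb) Set.left_mem_uIcc
  rw [Set.uIcc_of_le hb] at h1
  exact (continuousOn_const.add h1).congr fun x hx => h.2 x hx.1

lemma LocACOn.sub_const {f f' : ℝ → ℂ} {a a₁ : ℝ} (h : LocACOn f f' a) (ha : a ≤ a₁) (c : ℂ) :
    LocACOn (fun x => f x - c) f' a₁ := by
  have hI : ∀ b, a₁ ≤ b → IntervalIntegrable f' volume a₁ b := fun b hb =>
    (h.1 a₁ ha).symm.trans (h.1 b (ha.trans hb))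
  refine ⟨hI, fun x hx => ?_⟩
  have h1 := intervalIntegral.integral_add_adjacent_intervals (h.1 a₁ ha) (hI x hx)
  simp only [h.2 x (ha.trans hx), h.2 a₁ ha, ← h1]
  ring

/-- By continuity of `q`, the a.e. inequality in condition A gives `Re √q ≥ C` everywhere. -/
lemma CondA.le_re_sqrtQ {q q' : ℝ → ℂ} {x₀ C : ℝ} (h : CondA q q' x₀ C) (x : ℝ) (hx : x₀ ≤ x) :
    C ≤ (sqrtQ q x).re := by
  obtain ⟨-, hac, -, hre, -, hae⟩ := h
  have hlt : x₀ < x + 1 := by linarith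
  have hc : ContinuousOn (fun y => (sqrtQ q y).re) (Set.Icc x₀ (x + 1)) := by
    refine Complex.continuous_re.comp_continuousOn ?_
    refine (hac.continuousOn (x + 1) hlt.le).cpow continuousOn_const fun y hy => ?_
    have := sq_mem_slitPlane (hre y hy.1)
    rwa [sqrtQ, sqrt_sq] at this
  -- `min (Re √q) C` is continuous and a.e. equal to the constant `C`.
  have := Measure.eqOn_Icc_of_ae_eq (μ := volume) hlt.ne
    (f := fun y => min (sqrtQ q y).re C) (g := fun _ => C) ?_ (ContinuousOn.inf hc continuousOn_const)
    continuousOn_const ⟨hx, by linarith⟩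
  · simpa using this
  · filter_upwards [ae_restrict_of_ae hae, ae_restrict_mem measurableSet_Icc] with y hy hmem
    refine min_eq_right ?_
    have := hy hmem.1
    have h0 := norm_nonneg (sqrtQD q q' y / sqrtQ q y)
    linarith

/-- If `p` and `r` lie in the right half plane with `Re p ≥ C`, then `|r + p| ≥ C` rules out `r ≈ -p`;
so once `|r² - p²| < C |p|`, the numbers `r` and `p` themselves are close. -/
lemma norm_sub_le_of_sq_sub_sq {p r : ℂ} {L C : ℝ} (hp : C ≤ p.re) (hr : 0 ≤ r.re)
    (hL : ‖r ^ 2 - p ^ 2‖ = L) (h0 : 0 < ‖p‖) (hs : L < C * ‖p‖) :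
    ‖r - p‖ ≤ L / ‖p‖ := by
  have hprod : ‖r - p‖ * ‖r + p‖ = L := by rw [← norm_mul, ← hL]; ring_nf
  have hsum : C ≤ ‖r + p‖ := by
    have h := Complex.re_le_norm (r + p)
    rw [Complex.add_re] at h
    linarith
  have htri : 2 * ‖p‖ ≤ ‖r - p‖ + ‖r + p‖ := by
    have h := norm_sub_le (r + p) (r - p)
    have h2 : r + p - (r - p) = 2 * p := by ring
    rw [h2, norm_mul, Complex.norm_ofNat] at h
    linarith
  rw [le_div_iff₀ h0]
  have hn := norm_nonneg (r - p)
  have hn' := norm_nonneg (r + p)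
  -- One of `‖r - p‖`, `‖r + p‖` is at least `‖p‖`; the first would give `L ≥ C ‖p‖`.
  rcases le_total ‖p‖ ‖r + p‖ with h | h
  · rw [← hprod]; gcongr
  · have h1 : ‖p‖ ≤ ‖r - p‖ := by linarith
    have h2 : C * ‖p‖ ≤ ‖r + p‖ * ‖r - p‖ := by gcongr
    linarith

lemma logDeriv_sqrtQ_eq (q q' : ℝ → ℂ) (x : ℝ) :
    sqrtQD q q' x / sqrtQ q x = q' x / (2 * q x) := by
  have : sqrtQ q x * sqrtQ q x = q x := by rw [← sq]; exact sqrt_sq _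
  rw [sqrtQD, div_div, mul_assoc, this]

/-- The inequality of condition A survives subtracting `lam` at a point where `|q|` is large,
at the price of replacing `C` by `C / 2`. -/
lemma condA_ineq_shift {q q' : ℝ → ℂ} {C : ℝ} (hC : 0 < C) (lam : ℂ) (x : ℝ)
    (hre : C ≤ (sqrtQ q x).re)
    (h1 : 2 * ‖lam‖ ≤ ‖sqrtQ q x‖ ^ 2) (h2 : 6 * ‖lam‖ ≤ C * ‖sqrtQ q x‖) :
    C / 2 ≤ (sqrtQ (fun x => q x - lam) x).re ∧
    (C + (1 / 2) * ‖sqrtQD q q' x / sqrtQ q x‖ ≤ (sqrtQ q x).re →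
      C / 2 + (1 / 2) * ‖sqrtQD (fun x => q x - lam) q' x / sqrtQ (fun x => q x - lam) x‖
        ≤ (sqrtQ (fun x => q x - lam) x).re) := by
  rw [logDeriv_sqrtQ_eq, logDeriv_sqrtQ_eq]
  have hp2 : sqrtQ q x ^ 2 = q x := sqrt_sq _
  have hr2 : sqrtQ (fun x => q x - lam) x ^ 2 = q x - lam := sqrt_sq _
  have hr : 0 ≤ (sqrtQ (fun x => q x - lam) x).re := sqrt_re_nonneg _
  set p := sqrtQ q x
  set r := sqrtQ (fun x => q x - lam) x
  set L := ‖lam‖ with hL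
  have hL0 : 0 ≤ L := norm_nonneg _
  have hps : p.re ≤ ‖p‖ := Complex.re_le_norm p
  set s := ‖p‖ with hs
  have hs0 : 0 < s := by linarith
  have hCs : 0 < C * s := by positivity
  have hdiff : ‖r - p‖ ≤ L / s := by
    refine norm_sub_le_of_sq_sub_sq hre hr ?_ hs0 (by linarith)
    rw [hr2, hp2, sub_sub_cancel_left, norm_neg]
  have herr : L / s ≤ C / 6 := by rw [div_le_iff₀ hs0]; linarith
  have hre_r : p.re - L / s ≤ r.re := by
    have h := (Complex.abs_re_le_norm (r - p)).trans hdiff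
    rw [Complex.sub_re] at h
    linarith [(abs_le.1 h).1]
  refine ⟨by linarith, fun hA => ?_⟩
  have hq : ‖q x‖ = s ^ 2 := by rw [← hp2, norm_pow]
  have hq0 : 0 < s ^ 2 := by positivity
  have hql : s ^ 2 - L ≤ ‖q x - lam‖ := by
    rw [← hq]; exact norm_sub_norm_le _ _
  have hql0 : 0 < ‖q x - lam‖ := by linarith
  have hA0 : 0 ≤ (1 / 2) * ‖q' x / (2 * q x)‖ := by positivity
  have hscale : (1 / 2) * ‖q' x / (2 * (q x - lam))‖ * ‖q x - lam‖
      = (1 / 2) * ‖q' x / (2 * q x)‖ * s ^ 2 := by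
    simp only [norm_div, norm_mul, hq]
    field_simp
  set A := (1 / 2) * ‖q' x / (2 * q x)‖
  set B := (1 / 2) * ‖q' x / (2 * (q x - lam))‖
  have hAs : A ≤ s := by linarith
  -- The bound `|q - lam| ≥ |q| / 2` makes the relative error at most `2 L / s²`, and `A ≤ s`.
  have hB : B ≤ A + 2 * (L / s) := by
    refine le_of_mul_le_mul_right ?_ hql0
    rw [hscale]
    have e1 : (A + 2 * (L / s)) * (s ^ 2 - L) ≤ (A + 2 * (L / s)) * ‖q x - lam‖ := by
      gcongr
    refine le_trans ?_ e1
    have e2 : (A + 2 * (L / s)) * (s ^ 2 - L)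
        = A * s ^ 2 + L * (s - A) + (L / s) * (s ^ 2 - 2 * L) := by
      field_simp; ring
    rw [e2]
    have e3 : 0 ≤ L * (s - A) := mul_nonneg hL0 (by linarith)
    have e4 : 0 ≤ (L / s) * (s ^ 2 - 2 * L) := mul_nonneg (by positivity) (by linarith)
    linarith
  linarith

/-- If `|q| → ∞`, then condition A passes from `q` to every shift `q - lam`. -/
lemma CondA.shift {q q' : ℝ → ℂ} {x₀ C : ℝ} (hA : CondA q q' x₀ C)
    (hq : Tendsto (fun x => ‖q x‖) atTop atTop) (lam : ℂ) : lam ∈ NSet q q' := by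
  have hle := hA.le_re_sqrtQ
  obtain ⟨hli, hac, -, -, hC, hae⟩ := hA
  have hev : ∀ᶠ x in atTop, 2 * ‖lam‖ ≤ ‖sqrtQ q x‖ ^ 2 ∧ 6 * ‖lam‖ ≤ C * ‖sqrtQ q x‖ := by
    filter_upwards [hq.eventually_ge_atTop (2 * ‖lam‖),
      hq.eventually_ge_atTop ((6 * ‖lam‖ / C) ^ 2)] with x h1 h2
    have hn : ‖sqrtQ q x‖ ^ 2 = ‖q x‖ := by rw [← norm_pow]; congr 1; exact sqrt_sq _
    rw [← hn] at h1 h2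
    refine ⟨h1, ?_⟩
    have h3 := (sq_le_sq₀ (by positivity) (norm_nonneg _)).1 h2
    rw [div_le_iff₀ hC] at h3
    linarith
  obtain ⟨x₁, hx₁⟩ := (hev.and (eventually_ge_atTop (max x₀ 0))).exists_forall_of_atTop
  have hx₀₁ : x₀ ≤ x₁ := (le_max_left _ _).trans (hx₁ x₁ le_rfl).2
  have key := fun x (hx : x₁ ≤ x) => condA_ineq_shift (q' := q') hC lam x
    (hle x (hx₀₁.trans hx)) (hx₁ x hx).1.1 (hx₁ x hx).1.2
  have hpos : ∀ x, x₁ ≤ x → 0 < (sqrtQ (fun x => q x - lam) x).re := fun x hx =>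
    (half_pos hC).trans_le (key x hx).1
  refine ⟨x₁, C / 2, (le_max_right _ _).trans (hx₁ x₁ le_rfl).2, ?_, hac.sub_const hx₀₁ lam,
    ⟨0, le_rfl, fun x hx => ?_⟩, hpos, half_pos hC, ?_⟩
  · exact hli.sub ((locallyIntegrable_const lam).locallyIntegrableOn _)
  · have := sq_mem_slitPlane (hpos x hx)
    rw [sqrtQ, sqrt_sq] at this
    exact slitPlane_subset_PiSector_zero this
  · filter_upwards [hae] with x h hx
    exact (key x hx).2 (h (hx₀₁.trans hx))

/-- A point of `𝒩` is not a cluster point of `q` at infinity. -/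
lemma eventually_sq_le_norm_sub {q q' : ℝ → ℂ} {lam : ℂ} (h : lam ∈ NSet q q') :
    ∃ c > 0, ∀ᶠ x in atTop, c ≤ ‖q x - lam‖ := by
  obtain ⟨x₁, C, -, hA⟩ := h
  have hC : 0 < C := hA.2.2.2.2.1
  refine ⟨C ^ 2, by positivity, ?_⟩
  filter_upwards [eventually_ge_atTop x₁] with x hx
  have h1 := (hA.le_re_sqrtQ x hx).trans (Complex.re_le_norm _)
  have h2 : ‖q x - lam‖ = ‖sqrtQ (fun x => q x - lam) x‖ ^ 2 := by
    rw [← norm_pow]; congr 1; exact (sqrt_sq _).symm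
  rw [h2]
  gcongr

/-- If `q` satisfies condition A for `x ≥ x₀`, then `𝒩 = ℂ` iff `|q(x)| → ∞`
as `x → ∞`. -/
theorem statement2 (q q' : ℝ → ℂ) (x₀ C : ℝ) (hx₀ : 0 ≤ x₀)
    (hA : CondA q q' x₀ C) :
    NSet q q' = Set.univ ↔ Tendsto (fun x => ‖q x‖) atTop atTop := by
  refine ⟨fun hN => ?_, fun hq => Set.eq_univ_of_forall (hA.shift hq)⟩
  by_contra hq
  rw [tendsto_atTop] at hq
  push Not at hq
  obtain ⟨R, hR⟩ := hq
  -- `q` returns to a fixed ball infinitely often, hence clusters at some `lam`.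
  obtain ⟨lam, -, hlam⟩ :=
    (isCompact_closedBall (0 : ℂ) R).exists_mapClusterPt_of_frequently (l := atTop) (f := q)
      (hR.mono fun x hx => by simpa using hx.le)
  obtain ⟨c, hc, hev⟩ := eventually_sq_le_norm_sub (hN ▸ Set.mem_univ lam : lam ∈ NSet q q')
  obtain ⟨x, hx, hx'⟩ := ((hlam.frequently (Metric.ball_mem_nhds lam hc)).and_eventually hev).exists
  rw [dist_eq_norm] at hx
  linarith
end
end

section
/- Suppose the complex-valued potential q satisfies condition A for x ≥ 0 (with weight ρ(x)=Re p(x) − (1/2)|p′(x)/p(x)|). Then for every solution y of −y″ + q y = 0 on ℝ₊ and every a > 0, one has Re( y(a)·conj(y′(a))/conj(p(a)) ) − Re( y(0)·conj(y′(0))/conj(p(0)) ) ≥ ∫₀^a ρ(x) ( |y(x)|² + |y′(x)|²/|q(x)| ) dx. -/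
/-!
The function `F = Re (conj y * y' / p)`, which equals `Re (y * conj y' / conj p)`, is absolutely
continuous on `[0, a]`. Almost everywhere, using `y'' = q y` and `q = p ^ 2`,

  `F' = Re p * (|y|² + |y'|² / |q|) - Re (conj y * (y' / p) * (p' / p))`,

and the last term is at most `(1/2) |p'/p| (|y|² + |y'|² / |q|)` by the arithmetic-geometric mean
inequality (`rho_mul_le`). Hence `F'` dominates the integrand, which is nonnegative almost
everywhere by condition A, and integration of `F'` gives the claim.

The absolute continuity of `1/p` comes from that of `q`: `Re p` is bounded below by some `m > 0`
on the compact interval, so `|p(s) - p(t)| = |q(s) - q(t)| / |p(s) + p(t)|`, and with it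
`|1/p(s) - 1/p(t)|`, is controlled by `|q(s) - q(t)|` (see `norm_inv_sub_inv_le`).
-/

open MeasureTheory Filter Topology Complex

noncomputable section

/-- A function whose increments are dominated by those of an absolutely continuous function is
absolutely continuous. -/
theorem ac_of_dist_le {X Y : Type*} [PseudoMetricSpace X] [PseudoMetricSpace Y]
    {f : ℝ → X} {g : ℝ → Y} {a b K : ℝ} (hg : AbsolutelyContinuousOnInterval g a b)
    (h : ∀ s ∈ Set.uIcc a b, ∀ t ∈ Set.uIcc a b, dist (f s) (f t) ≤ K * dist (g s) (g t)) :
    AbsolutelyContinuousOnInterval f a b := by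
  unfold AbsolutelyContinuousOnInterval at hg ⊢
  have hg' := hg.const_mul K
  rw [mul_zero] at hg'
  refine squeeze_zero' (Eventually.of_forall fun E => Finset.sum_nonneg fun _ _ => dist_nonneg)
    ?_ hg'
  filter_upwards [mem_inf_of_right (mem_principal_self _)] with E hE
  rw [Finset.mul_sum]
  exact Finset.sum_le_sum fun i hi => h _ (hE.1 i hi).1 _ (hE.1 i hi).2

/-- The integral form of local absolute continuity implies the `ε`-`δ` form: the increments of `f`
are dominated by those of the real function `x ↦ ∫ t in 0..x, ‖f' t‖`. -/
theorem LocACOn.ac {f f' : ℝ → ℂ} (h : LocACOn f f' 0) {a : ℝ} (ha : 0 ≤ a) :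
    AbsolutelyContinuousOnInterval f 0 a := by
  have hint := h.1 a ha
  have hG := hint.norm.absolutelyContinuousOnInterval_intervalIntegral
    (c := 0) Set.left_mem_uIcc
  refine ac_of_dist_le (K := 1) hG fun s hs t ht => ?_
  have key : ∀ s ∈ Set.uIcc 0 a, IntervalIntegrable f' volume 0 s := fun s hs =>
    hint.mono_set (Set.uIcc_subset_uIcc Set.left_mem_uIcc hs)
  have hs0 : 0 ≤ s := by rw [Set.uIcc_of_le ha] at hs; exact hs.1
  have ht0 : 0 ≤ t := by rw [Set.uIcc_of_le ha] at ht; exact ht.1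
  rw [one_mul, dist_eq_norm, dist_eq_norm, h.2 s hs0, h.2 t ht0, add_sub_add_left_eq_sub,
    intervalIntegral.integral_interval_sub_left (key s hs) (key t ht),
    intervalIntegral.integral_interval_sub_left (key s hs).norm (key t ht).norm]
  exact intervalIntegral.norm_integral_le_abs_integral_norm

theorem LocACOn.ae_hasDerivAt {f f' : ℝ → ℂ} (h : LocACOn f f' 0) {a : ℝ} (ha : 0 ≤ a) :
    ∀ᵐ x : ℝ, x ∈ Set.Ioc 0 a → HasDerivAt f (f' x) x := by
  filter_upwards [(h.1 a ha).ae_hasDerivAt_integral] with x hx hxa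
  have h1 := hx (Set.uIcc_of_le ha ▸ Set.Ioc_subset_Icc_self hxa) 0 Set.left_mem_uIcc
  refine (h1.const_add (f 0)).congr_of_eventuallyEq ?_
  filter_upwards [lt_mem_nhds hxa.1] with z hz using h.2 z hz.le

/-- The pointwise lower bound for the derivative, in terms of `u = y`, `v = y' / p` and
`r = p' / p`. -/
theorem rho_mul_le (u v p r : ℂ) :
    (p.re - (1 / 2) * ‖r‖) * (‖u‖ ^ 2 + ‖v‖ ^ 2) ≤
      (starRingEnd ℂ v * v * starRingEnd ℂ p + starRingEnd ℂ u * u * p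
        - starRingEnd ℂ u * v * r).re := by
  have h1 : (starRingEnd ℂ u * v * r).re ≤ ‖u‖ * ‖v‖ * ‖r‖ := by
    refine (Complex.re_le_norm _).trans_eq ?_
    simp
  have h2 : (starRingEnd ℂ v * v * starRingEnd ℂ p + starRingEnd ℂ u * u * p).re
      = p.re * (‖u‖ ^ 2 + ‖v‖ ^ 2) := by
    rw [Complex.conj_mul', Complex.conj_mul', ← Complex.ofReal_pow, ← Complex.ofReal_pow,
      Complex.add_re, Complex.re_ofReal_mul, Complex.re_ofReal_mul, Complex.conj_re]
    ring
  rw [Complex.sub_re, h2]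
  nlinarith [mul_nonneg (norm_nonneg r) (sq_nonneg (‖u‖ - ‖v‖))]

/-- On a half-plane `Re z ≥ m > 0` the inverse of the square root is a Lipschitz function of the
square; this transfers absolute continuity from `q = p ^ 2` to `1 / p`. -/
theorem norm_inv_sub_inv_le {z w : ℂ} {m : ℝ} (hm : 0 < m) (hz : m ≤ z.re) (hw : m ≤ w.re) :
    ‖z⁻¹ - w⁻¹‖ ≤ (m * m * (2 * m))⁻¹ * ‖z ^ 2 - w ^ 2‖ := by
  have hz' : m ≤ ‖z‖ := hz.trans (Complex.re_le_norm z)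
  have hw' : m ≤ ‖w‖ := hw.trans (Complex.re_le_norm w)
  have hzw : 2 * m ≤ ‖z + w‖ := by
    refine le_trans ?_ (Complex.re_le_norm _)
    rw [Complex.add_re]; linarith
  have hz0 : z ≠ 0 := norm_pos_iff.1 (hm.trans_le hz')
  have hw0 : w ≠ 0 := norm_pos_iff.1 (hm.trans_le hw')
  have hzw0 : z + w ≠ 0 := norm_pos_iff.1 (by linarith)
  have e : z⁻¹ - w⁻¹ = (z * w * (z + w))⁻¹ * (w ^ 2 - z ^ 2) := by
    field_simp
    ring
  rw [e, norm_mul, norm_inv, norm_mul, norm_mul, norm_sub_rev]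
  gcongr

theorem sqrtQ_sq (q : ℝ → ℂ) (x : ℝ) : sqrtQ q x ^ 2 = q x := by
  simp [sqrtQ]

theorem hasDerivAt_sqrtQ {q : ℝ → ℂ} {d : ℂ} {x : ℝ} (hq : HasDerivAt q d x)
    (hs : q x ∈ slitPlane) : HasDerivAt (sqrtQ q) (d / (2 * sqrtQ q x)) x := by
  have h := ((hasDerivAt_id (q x)).cpow_const (c := (1 : ℂ) / 2) hs).comp x hq
  have h0 : q x ≠ 0 := slitPlane_ne_zero hs
  have hp : sqrtQ q x ≠ 0 := by
    intro h; apply h0; rw [← sqrtQ_sq q x, h]; simp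
  have e : d / (2 * sqrtQ q x) = 1 / 2 * q x ^ ((1 : ℂ) / 2 - 1) * 1 * d := by
    rw [Complex.cpow_sub _ _ h0, Complex.cpow_one]
    change _ = 1 / 2 * (sqrtQ q x / q x) * 1 * d
    rw [← sqrtQ_sq q x]
    field_simp
  rw [e]
  exact h

theorem mem_slitPlane_of_mem_PiSector {κ : ℝ} (hκ : 0 ≤ κ) {z : ℂ} (hz : z ∈ PiSector κ) :
    z ∈ slitPlane :=
  mem_slitPlane_iff_arg.2 ⟨by have := hz.2.2; intro h; linarith, hz.1⟩

/-- If `q` satisfies condition A for `x ≥ 0`, then for every solution of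
`-y'' + q y = 0` on `ℝ₊` and every `a > 0`,
`Re(y ȳ'/p̄)|₀^a ≥ ∫₀^a ρ (|y|² + |y'|²/|q|)`. -/
theorem statement4 (q q' : ℝ → ℂ) (C : ℝ) (hA : CondA q q' 0 C)
    (y y' : ℝ → ℂ) (hy : IsSol q 0 y y') (a : ℝ) (ha : 0 < a) :
    ∫ x in (0:ℝ)..a, rho q q' x * (‖y x‖ ^ 2 + ‖y' x‖ ^ 2 / ‖q x‖) ≤
      (y a * (starRingEnd ℂ) (y' a) / (starRingEnd ℂ) (sqrtQ q a)).re -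
      (y 0 * (starRingEnd ℂ) (y' 0) / (starRingEnd ℂ) (sqrtQ q 0)).re := by
  obtain ⟨-, hq, ⟨κ, hκ, hsec⟩, hpos, hC, hae⟩ := hA
  obtain ⟨hy1, hy2⟩ := hy
  have hI : Set.uIcc 0 a = Set.Icc 0 a := Set.uIcc_of_le ha.le
  have hslit : ∀ x, 0 ≤ x → q x ∈ slitPlane := fun x hx =>
    mem_slitPlane_of_mem_PiSector hκ (hsec x hx)
  have hqac := hq.ac ha.le
  obtain ⟨m, hm, hmp⟩ : ∃ m, 0 < m ∧ ∀ x ∈ Set.Icc 0 a, m ≤ (sqrtQ q x).re := by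
    have hcont : ContinuousOn (fun x => (sqrtQ q x).re) (Set.Icc 0 a) := by
      have h := hqac.continuousOn
      rw [hI] at h
      exact Complex.continuous_re.comp_continuousOn
        (h.cpow_const fun x hx => hslit x hx.1)
    obtain ⟨x, hx, hmin⟩ := isCompact_Icc.exists_isMinOn (Set.nonempty_Icc.2 ha.le) hcont
    exact ⟨_, hpos x hx.1, fun z hz => hmin hz⟩
  have hpac : AbsolutelyContinuousOnInterval (fun x => (sqrtQ q x)⁻¹) 0 a := by
    refine ac_of_dist_le (K := (m * m * (2 * m))⁻¹) hqac fun s hs t ht => ?_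
    rw [hI] at hs ht
    rw [dist_eq_norm, dist_eq_norm, ← sqrtQ_sq q s, ← sqrtQ_sq q t]
    exact norm_inv_sub_inv_le hm (hmp s hs) (hmp t ht)
  have hcac : AbsolutelyContinuousOnInterval (fun x => starRingEnd ℂ (y x)) 0 a := by
    refine ac_of_dist_le (K := 1) (hy1.ac ha.le) fun s _ t _ => ?_
    rw [Complex.dist_conj_conj, one_mul]
  set W : ℝ → ℂ := fun x => starRingEnd ℂ (y x) * y' x * (sqrtQ q x)⁻¹ with hW
  have hWac : AbsolutelyContinuousOnInterval W 0 a := (hcac.smul (hy2.ac ha.le)).smul hpac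
  set F : ℝ → ℝ := fun x => (W x).re with hF
  have hFac : AbsolutelyContinuousOnInterval F 0 a := by
    refine ac_of_dist_le (K := 1) hWac fun s _ t _ => ?_
    rw [one_mul, Real.dist_eq, dist_eq_norm, hF, ← Complex.sub_re]
    exact Complex.abs_re_le_norm _
  have hFval : ∀ x, (y x * (starRingEnd ℂ) (y' x) / (starRingEnd ℂ) (sqrtQ q x)).re = F x := by
    intro x
    rw [← Complex.conj_re]
    simp [hF, hW, div_eq_mul_inv]
  rw [hFval, hFval, ← hFac.integral_deriv_eq_sub, intervalIntegral.integral_of_le ha.le,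
    intervalIntegral.integral_of_le ha.le]
  -- Nonnegativity of the integrand makes its integrability unnecessary.
  refine integral_mono_of_nonneg ?_ hFac.intervalIntegrable_deriv.1 ?_
  · rw [EventuallyLE, ae_restrict_iff' measurableSet_Ioc]
    filter_upwards [hae] with x hx hxa
    have h := hx hxa.1.le
    refine mul_nonneg ?_ (by positivity)
    rw [rho]
    linarith
  · rw [EventuallyLE, ae_restrict_iff' measurableSet_Ioc]
    filter_upwards [hy1.ae_hasDerivAt ha.le, hy2.ae_hasDerivAt ha.le, hq.ae_hasDerivAt ha.le]
      with x h1 h2 h3 hxa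
    have hp0 : sqrtQ q x ≠ 0 := by
      intro h
      have := hpos x hxa.1.le
      simp [h] at this
    have hp := (hasDerivAt_sqrtQ (h3 hxa) (hslit x hxa.1.le)).inv hp0
    have hc : HasDerivAt (fun x => starRingEnd ℂ (y x)) (starRingEnd ℂ (y' x)) x := (h1 hxa).star
    have hWd := (hc.mul (h2 hxa)).mul hp
    have hFd : HasDerivAt F _ x := Complex.reCLM.hasFDerivAt.comp_hasDerivAt x hWd
    rw [hFd.deriv, ← sqrtQ_sq q x, norm_pow, ← div_pow, ← norm_div, rho]
    refine (rho_mul_le _ _ _ _).trans_eq ?_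
    have hcp : starRingEnd ℂ (sqrtQ q x) ≠ 0 := by simpa using hp0
    rw [Complex.reCLM_apply]
    congr 1
    simp only [sqrtQD, map_div₀, Pi.zero_apply, sub_zero, Pi.mul_apply, Pi.inv_apply]
    field_simp
    ring
end
end
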